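/- Let (E^•, I_•, ∫) be a Cheeger–Simons model over 𝕂 and k ≥ 0, and let Q^{k+1}(CS) = {(ω, [u]) ∈ E^{k+1} × H^{k+1}(I^•) : dω = 0 and Φ_*[u] = [ω̃] in H^{k+1}(F^•)}. Then there is a short exact sequence of abelian groups 0 → H^k(F^•)/Φ_*(H^k(I^•)) → Diff^k(CS) → Q^{k+1}(CS) → 0, where the first map sends the class of a δ-closed a ∈ F^k to (q∘a')|_{Z_k(I_•)} for the unique closed a' = α̃ with α ∈ E^k and [α̃] = [a] (via the de Rham isomorphism), and the second map is (δ₁, δ₂). -/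

import Mathlib

open AddSubgroup

noncomputable section

/-- Cycles of an `ℕ`-indexed chain complex, with the convention `Z_0 = I_0`
(i.e. `∂ : I_0 → I_{-1} = 0`). -/
def Zc {I : ℕ → Type*} [∀ i, AddCommGroup (I i)] (bd : ∀ k, I (k+1) →+ I k) :
    ∀ k, AddSubgroup (I k)
  | 0 => ⊤
  | n+1 => (bd n).ker

theorem mem_Zc_bd {I : ℕ → Type*} [∀ i, AddCommGroup (I i)] (bd : ∀ k, I (k+1) →+ I k)
    (hbd : ∀ k x, bd k (bd (k+1) x) = 0) :
    ∀ (k : ℕ) (β : I (k+1)), bd k β ∈ Zc bd k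
  | 0, _ => mem_top _
  | n+1, β => by simpa [Zc, AddMonoidHom.mem_ker] using hbd n β

/-- Coboundaries of an `ℕ`-indexed cochain complex, with the convention
`B^0 = 0`. -/
def Bc {E : ℕ → Type*} [∀ i, AddCommGroup (E i)] (d : ∀ k, E k →+ E (k+1)) :
    ∀ k, AddSubgroup (E k)
  | 0 => ⊥
  | n+1 => (d n).range

/-- Cohomology of an `ℕ`-indexed cochain complex. -/
abbrev Hc {E : ℕ → Type*} [∀ i, AddCommGroup (E i)] (d : ∀ k, E k →+ E (k+1)) (k : ℕ) :=
  ↥(d k).ker ⧸ ((Bc d k).addSubgroupOf (d k).ker)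

/-- The class of a cocycle in cohomology. -/
def Hmk {E : ℕ → Type*} [∀ i, AddCommGroup (E i)] (d : ∀ k, E k →+ E (k+1)) (k : ℕ) :
    ↥(d k).ker →+ Hc d k := QuotientAddGroup.mk' _

/-- The codifferential on `Hom(I_•, A)` induced by the boundary map of `I_•`. -/
def codiff {I : ℕ → Type*} [∀ i, AddCommGroup (I i)] (bd : ∀ k, I (k+1) →+ I k)
    (A : Type*) [AddCommGroup A] (k : ℕ) : (I k →+ A) →+ (I (k+1) →+ A) :=
  AddMonoidHom.mk' (fun h => h.comp (bd k)) (fun h g => by ext x; simp)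

/-- `ℤ` regarded as an additive subgroup of `𝕂`. -/
def intSub (𝕂 : Type*) [Field 𝕂] : AddSubgroup 𝕂 := zmultiples (1 : 𝕂)

/-- The group `𝕂/ℤ`. -/
abbrev KmodZ (𝕂 : Type*) [Field 𝕂] := 𝕂 ⧸ intSub 𝕂

/-- The quotient map `q : 𝕂 → 𝕂/ℤ`. -/
def qZ (𝕂 : Type*) [Field 𝕂] : 𝕂 →+ KmodZ 𝕂 := QuotientAddGroup.mk' _

/-- The inclusion `Φ : Hom(I_k, ℤ) → Hom(I_k, 𝕂)`. -/
def PhiMap {I : ℕ → Type*} [∀ i, AddCommGroup (I i)] (𝕂 : Type*) [Field 𝕂] (k : ℕ) :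
    (I k →+ ℤ) →+ (I k →+ 𝕂) :=
  AddMonoidHom.mk' (fun h => (Int.castAddHom 𝕂).comp h) (fun a b => by ext x; simp)

/-- The differential character group `Diff^k` of a Cheeger–Simons model. -/
def DiffChar {𝕂 : Type*} [Field 𝕂] {I E : ℕ → Type*}
    [∀ i, AddCommGroup (I i)] [∀ i, AddCommGroup (E i)]
    (bd : ∀ k, I (k+1) →+ I k) (hbd : ∀ k x, bd k (bd (k+1) x) = 0)
    (pair : ∀ k, E k →+ (I k →+ 𝕂)) (k : ℕ) :
    AddSubgroup ((Zc bd k) →+ KmodZ 𝕂) where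
  carrier := {f | ∃ ω : E (k+1), ∀ β : I (k+1),
      f ⟨bd k β, mem_Zc_bd bd hbd k β⟩ = qZ 𝕂 (pair (k+1) ω β)}
  add_mem' := by
    rintro f g ⟨ω, hω⟩ ⟨ω', hω'⟩
    exact ⟨ω + ω', fun β => by
      simp [AddMonoidHom.add_apply, hω β, hω' β]⟩
  zero_mem' := ⟨0, fun β => by simp [qZ]⟩
  neg_mem' := by
    rintro f ⟨ω, hω⟩
    exact ⟨-ω, fun β => by simp [AddMonoidHom.neg_apply, hω β]⟩

/-- The subgroup `E^k_0` of closed elements of `E^k` with integral periods. -/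
def Ezero {𝕂 : Type*} [Field 𝕂] {I E : ℕ → Type*}
    [∀ i, AddCommGroup (I i)] [∀ i, AddCommGroup (E i)]
    (bd : ∀ k, I (k+1) →+ I k) (d : ∀ k, E k →+ E (k+1))
    (pair : ∀ k, E k →+ (I k →+ 𝕂)) (k : ℕ) : AddSubgroup (E k) where
  carrier := {ω | d k ω = 0 ∧ ∀ α ∈ Zc bd k, pair k ω α ∈ intSub 𝕂}
  add_mem' := by
    rintro ω ω' ⟨h1, h2⟩ ⟨h1', h2'⟩
    refine ⟨by simp [h1, h1'], fun α hα => ?_⟩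
    simpa [AddMonoidHom.add_apply] using add_mem (h2 α hα) (h2' α hα)
  zero_mem' := ⟨by simp, fun α _ => by simp [zero_mem]⟩
  neg_mem' := by
    rintro ω ⟨h1, h2⟩
    exact ⟨by simp [h1], fun α hα => by
      simpa [AddMonoidHom.neg_apply] using neg_mem (h2 α hα)⟩


theorem aux_int {𝕂 : Type*} [Field 𝕂] [CharZero 𝕂] {M : Type*} [AddCommGroup M] (h : M →+ 𝕂)
    (hh : ∀ x, h x ∈ intSub 𝕂) : ∃ u : M →+ ℤ, ∀ x, ((u x : ℤ) : 𝕂) = h x := by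
  have h1 : ∀ x, ∃ n : ℤ, (n : 𝕂) = h x := by
    intro x
    obtain ⟨n, hn⟩ := AddSubgroup.mem_zmultiples_iff.1 (hh x)
    exact ⟨n, by simpa using hn⟩
  choose u hu using h1
  refine ⟨AddMonoidHom.mk' u (fun a b => ?_), hu⟩
  have : ((u (a + b) : ℤ) : 𝕂) = ((u a + u b : ℤ) : 𝕂) := by
    push_cast
    rw [hu, hu, hu, map_add]
  exact_mod_cast this

theorem aux_q {𝕂 : Type*} [Field 𝕂] (x : 𝕂) : qZ 𝕂 x = 0 ↔ x ∈ intSub 𝕂 := by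
  simp [qZ]

theorem aux_qint {𝕂 : Type*} [Field 𝕂] (n : ℤ) : qZ 𝕂 (n : 𝕂) = 0 := by
  rw [aux_q]
  exact AddSubgroup.mem_zmultiples_iff.2 ⟨n, by simp⟩

theorem aux_fac {A M N : Type*} [AddCommGroup A] [AddCommGroup M] [AddCommGroup N]
    [DivisibleBy A ℤ] (g : M →+ N) (h : M →+ A) (hh : ∀ x, g x = 0 → h x = 0) :
    ∃ G : N →+ A, ∀ x, G (g x) = h x := by
  let g' : g.range →+ A := (QuotientAddGroup.lift g.ker h hh).comp
    (QuotientAddGroup.quotientKerEquivRange g).symm.toAddMonoidHom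
  have hg : ∀ x, g' ⟨g x, x, rfl⟩ = h x := by
    intro x
    have : (QuotientAddGroup.quotientKerEquivRange g).symm ⟨g x, x, rfl⟩
      = QuotientAddGroup.mk x := by
      rw [AddEquiv.symm_apply_eq]
      rfl
    simp only [g', AddMonoidHom.comp_apply]
    erw [this]
    rfl
  obtain ⟨G, hG⟩ := (Module.Baer.of_divisible A).extension_property_addMonoidHom
    g.range.subtype Subtype.val_injective g'
  refine ⟨G, fun x => ?_⟩
  have := DFunLike.congr_fun hG ⟨g x, x, rfl⟩
  exact this.trans (hg x)

theorem aux_split {M N : Type*} [AddCommGroup M] [AddCommGroup N] [Module.Free ℤ M]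
    [Module.Free ℤ N] (g : M →+ N) : ∃ r : M →+ g.ker, ∀ x : g.ker, r x = x := by
  let b := Module.Free.chooseBasis ℤ M
  let j : M →+ (Module.Free.ChooseBasisIndex ℤ M → ℚ) :=
    AddMonoidHom.mk' (fun m i => ((b.repr m i : ℤ) : ℚ)) (fun x y => by ext i; simp)
  have hj : Function.Injective j := by
    intro x y hxy
    apply b.repr.injective
    ext i
    have : ((b.repr x i : ℤ) : ℚ) = ((b.repr y i : ℤ) : ℚ) := congrFun hxy i
    exact_mod_cast this
  let _ : DivisibleBy ℚ ℤ := divisibleByIntOfCharZero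
  let K := g.ker.map j
  let _ : DivisibleBy ((Module.Free.ChooseBasisIndex ℤ M → ℚ) ⧸ K) ℤ :=
    (QuotientAddGroup.mk'_surjective K).divisibleBy _ (fun a n => map_zsmul _ n a)
  obtain ⟨G, hG⟩ := aux_fac g ((QuotientAddGroup.mk' K).comp j) (fun x hx =>
    (QuotientAddGroup.eq_zero_iff _).2 ⟨x, hx, rfl⟩)
  obtain ⟨t, ht⟩ := Module.projective_lifting_property (QuotientAddGroup.mk' K).toIntLinearMap
    G.toIntLinearMap (QuotientAddGroup.mk'_surjective _)
  have ht' : ∀ n, QuotientAddGroup.mk' K (t n) = G n := fun n => LinearMap.congr_fun ht n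
  have hk : ∀ m, ∃ k : g.ker, j k = j m - t (g m) := by
    intro m
    have h1 : QuotientAddGroup.mk' K (j m - t (g m)) = 0 := by
      rw [map_sub, ht', hG]
      exact sub_self _
    obtain ⟨k, hk, hk'⟩ := (QuotientAddGroup.eq_zero_iff _).1 h1
    exact ⟨⟨k, hk⟩, hk'⟩
  choose r hr using hk
  refine ⟨AddMonoidHom.mk' r (fun x y => ?_), fun x => ?_⟩
  · apply Subtype.ext
    apply hj
    rw [AddSubgroup.coe_add, map_add, hr, hr, hr, map_add, map_add, map_add]
    abel
  · apply Subtype.ext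
    apply hj
    have : g x = 0 := x.2
    change j (r x) = j x
    rw [hr, this, map_zero, sub_zero]

theorem aux_retr {I : ℕ → Type*} [∀ i, AddCommGroup (I i)] [∀ i, Module.Free ℤ (I i)]
    (bd : ∀ k, I (k+1) →+ I k) : ∀ k, ∃ r : I k →+ Zc bd k, ∀ x : Zc bd k, r x = x
  | 0 => ⟨AddMonoidHom.mk' (fun x => ⟨x, mem_top _⟩) (fun _ _ => rfl), fun _ => rfl⟩
  | n+1 => aux_split (bd n)

theorem aux_van {𝕂 : Type*} [Field 𝕂] [CharZero 𝕂]
    {I : ℕ → Type*} [∀ i, AddCommGroup (I i)]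
    (bd : ∀ k, I (k+1) →+ I k) : ∀ k (h : I k →+ 𝕂), (∀ x ∈ Zc bd k, h x = 0) →
      h ∈ Bc (codiff bd 𝕂) k
  | 0, h, hh => by
    have : h = 0 := by
      ext x
      exact hh x (mem_top _)
    rw [this]
    exact zero_mem _
  | n+1, h, hh => by
    let _ : DivisibleBy 𝕂 ℤ := divisibleByIntOfCharZero
    obtain ⟨G, hG⟩ := aux_fac (bd n) h hh
    refine ⟨G, ?_⟩
    ext x
    exact hG x

theorem aux_Bvan {A : Type*} [AddCommGroup A] {I : ℕ → Type*} [∀ i, AddCommGroup (I i)]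
    (bd : ∀ k, I (k+1) →+ I k) : ∀ k (h : I k →+ A), h ∈ Bc (codiff bd A) k →
      ∀ x ∈ Zc bd k, h x = 0
  | 0, h, hh, x, _ => by
    have : h = 0 := hh
    simp [this]
  | n+1, h, hh, x, hx => by
    obtain ⟨g, rfl⟩ := hh
    have : bd n x = 0 := hx
    simp [codiff, this]

theorem aux_Hmk {E : ℕ → Type*} [∀ i, AddCommGroup (E i)] (d : ∀ k, E k →+ E (k+1)) (k : ℕ)
    (a b : (d k).ker) : Hmk d k a = Hmk d k b ↔ (a : E k) - b ∈ Bc d k := by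
  rw [← sub_eq_zero, ← map_sub]
  exact (QuotientAddGroup.eq_zero_iff _).trans AddSubgroup.mem_addSubgroupOf

/-- Lift a character on cycles. -/
theorem aux_lift {𝕂 : Type*} [Field 𝕂] {I : ℕ → Type*} [∀ i, AddCommGroup (I i)]
    [∀ i, Module.Free ℤ (I i)] (bd : ∀ k, I (k+1) →+ I k) (k : ℕ) (f : Zc bd k →+ KmodZ 𝕂) :
    ∃ T : I k →+ 𝕂, ∀ x : Zc bd k, qZ 𝕂 (T x) = f x := by
  obtain ⟨r, hr⟩ := aux_retr bd k
  obtain ⟨T, hT⟩ := Module.projective_lifting_property (qZ 𝕂).toIntLinearMap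
    (f.comp r).toIntLinearMap (QuotientAddGroup.mk'_surjective _)
  refine ⟨T.toAddMonoidHom, fun x => ?_⟩
  have := LinearMap.congr_fun hT x
  refine Eq.trans this ?_
  simp [hr]

/-- Extend integral characters on cycles. -/
theorem aux_ext {𝕂 : Type*} [Field 𝕂] [CharZero 𝕂] {I : ℕ → Type*} [∀ i, AddCommGroup (I i)]
    [∀ i, Module.Free ℤ (I i)] (bd : ∀ k, I (k+1) →+ I k) (k : ℕ) (a : I k →+ 𝕂)
    (ha : ∀ x ∈ Zc bd k, qZ 𝕂 (a x) = 0) :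
    ∃ u : I k →+ ℤ, ∀ x ∈ Zc bd k, ((u x : ℤ) : 𝕂) = a x := by
  obtain ⟨r, hr⟩ := aux_retr bd k
  obtain ⟨u, hu⟩ := aux_int (a.comp (Zc bd k).subtype) (fun x => (aux_q _).1 (ha x x.2))
  refine ⟨u.comp r, fun x hx => ?_⟩
  have := hu ⟨x, hx⟩
  simpa [hr ⟨x, hx⟩] using this

set_option maxHeartbeats 2000000

/-- With `Q^{k+1}(𝒞𝒮) = {(ω, [u]) : dω = 0, Φ_*[u] = [ω̃]}`, there is a
short exact sequence `0 → H^k(F^•)/Φ_*(H^k(I^•)) → Diff^k(𝒞𝒮) → Q^{k+1}(𝒞𝒮) → 0`, where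
the first map sends the class of a `δ`-closed `a ∈ F^k` to `(q ∘ α̃)|_{Z_k}` for the
closed `α ∈ E^k` with `[α̃] = [a]`, and the second map is `(δ₁, δ₂)`. -/
theorem statement6
    {𝕂 : Type*} [Field 𝕂] [CharZero 𝕂]
    (I E : ℕ → Type*)
    [∀ i, AddCommGroup (I i)] [∀ i, Module.Free ℤ (I i)]
    [∀ i, AddCommGroup (E i)] [∀ i, Module 𝕂 (E i)]
    (bd : ∀ k, I (k+1) →+ I k)
    (hbd : ∀ k x, bd k (bd (k+1) x) = 0)
    (d : ∀ k, E k →+ E (k+1))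
    (hd : ∀ k x, d (k+1) (d k x) = 0)
    (hdsmul : ∀ (k : ℕ) (c : 𝕂) (e : E k), d k (c • e) = c • d k e)
    (pair : ∀ k, E k →+ (I k →+ 𝕂))
    (pair_smul : ∀ (k : ℕ) (c : 𝕂) (e : E k) (x : I k), pair k (c • e) x = c * pair k e x)
    (pair_injE : ∀ k, Function.Injective (pair k))
    (pair_injI : ∀ (k : ℕ) (x y : I k), (∀ e : E k, pair k e x = pair k e y) → x = y)
    (int_triv : ∀ (k : ℕ) (e : E k), (∀ β : I k, pair k e β ∈ intSub 𝕂) → e = 0)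
    (stokes : ∀ (k : ℕ) (e : E k) (α : I (k+1)), pair k e (bd k α) = pair (k+1) (d k e) α)
    (deRham_inj : ∀ (k : ℕ) (e : E k), d k e = 0 → pair k e ∈ Bc (codiff bd 𝕂) k → e ∈ Bc d k)
    (deRham_surj : ∀ (k : ℕ) (h : I k →+ 𝕂), codiff bd 𝕂 k h = 0 →
      ∃ e : E k, d k e = 0 ∧ h - pair k e ∈ Bc (codiff bd 𝕂) k)
    (k : ℕ) :
    ∃ (ι : Hc (codiff bd 𝕂) k →+ ↥(DiffChar bd hbd pair k))
      (δ₁ : ↥(DiffChar bd hbd pair k) →+ E (k+1))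
      (δ₂ : ↥(DiffChar bd hbd pair k) →+ Hc (codiff bd ℤ) (k+1)),
      (∀ (a : I k →+ 𝕂) (ha : a ∈ (codiff bd 𝕂 k).ker) (α : E k), d k α = 0 →
          a - pair k α ∈ Bc (codiff bd 𝕂) k →
          ((ι (Hmk (codiff bd 𝕂) k ⟨a, ha⟩)) : ↥(Zc bd k) →+ KmodZ 𝕂)
            = (qZ 𝕂).comp ((pair k α).comp (Zc bd k).subtype)) ∧
      (∀ (a : I k →+ 𝕂) (ha : a ∈ (codiff bd 𝕂 k).ker),
          ι (Hmk (codiff bd 𝕂) k ⟨a, ha⟩) = 0 ↔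
            ∃ u : I k →+ ℤ, u ∈ (codiff bd ℤ k).ker ∧
              a - PhiMap 𝕂 k u ∈ Bc (codiff bd 𝕂) k) ∧
      (∀ (f : ↥(DiffChar bd hbd pair k)) (β : I (k+1)),
          (f : ↥(Zc bd k) →+ KmodZ 𝕂) ⟨bd k β, mem_Zc_bd bd hbd k β⟩
            = qZ 𝕂 (pair (k+1) (δ₁ f) β)) ∧
      (∀ (f : ↥(DiffChar bd hbd pair k)) (T : I k →+ 𝕂) (ω : E (k+1))
          (c : I (k+1) →+ ℤ) (hc : c ∈ (codiff bd ℤ (k+1)).ker),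
          (∀ x : ↥(Zc bd k), qZ 𝕂 (T x) = (f : ↥(Zc bd k) →+ KmodZ 𝕂) x) →
          codiff bd 𝕂 k T = pair (k+1) ω - PhiMap 𝕂 (k+1) c →
          δ₂ f = Hmk (codiff bd ℤ) (k+1) ⟨c, hc⟩) ∧
      (∀ f, d (k+1) (δ₁ f) = 0 ∧
        ∃ (u : I (k+1) →+ ℤ) (hu : u ∈ (codiff bd ℤ (k+1)).ker),
          δ₂ f = Hmk (codiff bd ℤ) (k+1) ⟨u, hu⟩ ∧
          pair (k+1) (δ₁ f) - PhiMap 𝕂 (k+1) u ∈ Bc (codiff bd 𝕂) (k+1)) ∧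
      (∀ (ω : E (k+1)) (u : I (k+1) →+ ℤ) (hu : u ∈ (codiff bd ℤ (k+1)).ker),
          d (k+1) ω = 0 →
          pair (k+1) ω - PhiMap 𝕂 (k+1) u ∈ Bc (codiff bd 𝕂) (k+1) →
          ∃ f, δ₁ f = ω ∧ δ₂ f = Hmk (codiff bd ℤ) (k+1) ⟨u, hu⟩) ∧
      (∀ f, (δ₁ f = 0 ∧ δ₂ f = 0) ↔ f ∈ ι.range) := by
  have hZ := fun β => mem_Zc_bd bd hbd k β
  -- iota
  let ι0 : ↥(codiff bd 𝕂 k).ker →+ ↥(DiffChar bd hbd pair k) :=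
    AddMonoidHom.mk' (fun a => ⟨(qZ 𝕂).comp (a.1.comp (Zc bd k).subtype), 0, fun β => by
      have : a.1 (bd k β) = 0 := DFunLike.congr_fun a.2 β
      simp [this]⟩) (fun a b => by ext x; simp)
  have hι0 : ∀ a x, (ι0 a : Zc bd k →+ KmodZ 𝕂) x = qZ 𝕂 (a.1 x) := fun _ _ => rfl
  let ι : Hc (codiff bd 𝕂) k →+ ↥(DiffChar bd hbd pair k) :=
    QuotientAddGroup.lift _ ι0 (fun a ha => by
      apply Subtype.ext
      ext x
      rw [hι0, aux_Bvan bd k a.1 (AddSubgroup.mem_addSubgroupOf.1 ha) x x.2]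
      simp)
  have hι : ∀ a, ι (Hmk _ _ a) = ι0 a := fun _ => rfl
  -- uniqueness of omega
  have huniq : ∀ ω ω' : E (k+1), (∀ β, qZ 𝕂 (pair (k+1) ω β) = qZ 𝕂 (pair (k+1) ω' β)) →
      ω = ω' := by
    intro ω ω' h
    rw [← sub_eq_zero]
    apply int_triv
    intro β
    rw [← aux_q, map_sub, AddMonoidHom.sub_apply, map_sub, h, sub_self]
  have hex : ∀ f : ↥(DiffChar bd hbd pair k), ∃ ω : E (k+1), ∀ β : I (k+1),
      f.1 ⟨bd k β, hZ β⟩ = qZ 𝕂 (pair (k+1) ω β) := fun f => f.2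
  choose D1 hD1 using hex
  have D1add : ∀ f g, D1 (f + g) = D1 f + D1 g := by
    intro f g
    apply huniq
    intro β
    rw [← hD1, map_add, AddMonoidHom.add_apply, map_add, ← hD1, ← hD1]
    rfl
  let δ₁ : ↥(DiffChar bd hbd pair k) →+ E (k+1) := AddMonoidHom.mk' D1 D1add
  have hδ₁ : ∀ f β, f.1 ⟨bd k β, hZ β⟩ = qZ 𝕂 (pair (k+1) (δ₁ f) β) := hD1
  have hclosed : ∀ f, d (k+1) (δ₁ f) = 0 := by
    intro f
    apply int_triv
    intro β
    rw [← stokes, ← aux_q, ← hδ₁]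
    have : (⟨bd k (bd (k+1) β), hZ _⟩ : Zc bd k) = 0 := Subtype.ext (hbd k β)
    rw [this, map_zero]
  have hex2 : ∀ f : ↥(DiffChar bd hbd pair k), ∃ (T : I k →+ 𝕂) (c : (codiff bd ℤ (k+1)).ker),
      (∀ x : ↥(Zc bd k), qZ 𝕂 (T x) = f.1 x) ∧
      ∀ β, T (bd k β) = pair (k+1) (δ₁ f) β - (c.1 β : ℤ) := by
    intro f
    obtain ⟨T, hT⟩ := aux_lift bd k f.1
    obtain ⟨c, hc⟩ := aux_int (pair (k+1) (δ₁ f) - T.comp (bd k)) (fun β => by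
      rw [← aux_q, AddMonoidHom.sub_apply, map_sub, ← hδ₁, ← hT]
      simp)
    refine ⟨T, ⟨c, ?_⟩, hT, fun β => ?_⟩
    · rw [AddMonoidHom.mem_ker]
      ext β
      have := hc (bd (k+1) β)
      rw [AddMonoidHom.sub_apply, AddMonoidHom.comp_apply, stokes, hclosed, hbd] at this
      simpa [codiff] using this
    · simp [hc]
  choose TT C hTT hC using hex2
  have hu2 : ∀ (f : ↥(DiffChar bd hbd pair k)) (T : I k →+ 𝕂) (c : (codiff bd ℤ (k+1)).ker),
      (∀ x : ↥(Zc bd k), qZ 𝕂 (T x) = f.1 x) →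
      (∀ β, T (bd k β) = pair (k+1) (δ₁ f) β - (c.1 β : ℤ)) →
      Hmk (codiff bd ℤ) (k+1) (C f) = Hmk (codiff bd ℤ) (k+1) c := by
    intro f T c hT hc
    rw [aux_Hmk]
    obtain ⟨u, hu⟩ := aux_ext bd k (T - TT f) (fun x hx => by
      rw [AddMonoidHom.sub_apply, map_sub, hT ⟨x, hx⟩, hTT f ⟨x, hx⟩, sub_self])
    refine ⟨u, ?_⟩
    ext β
    have h1 := hu _ (hZ β)
    rw [AddMonoidHom.sub_apply, hc, hC] at h1
    have h2 : ((u (bd k β) : ℤ) : 𝕂) = (((C f).1 β - c.1 β : ℤ) : 𝕂) := by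
      rw [h1]
      push_cast
      ring
    exact_mod_cast h2
  let δ₂ : ↥(DiffChar bd hbd pair k) →+ Hc (codiff bd ℤ) (k+1) :=
    AddMonoidHom.mk' (fun f => Hmk (codiff bd ℤ) (k+1) (C f)) (fun f g => by
      rw [← map_add]
      apply hu2 (f + g) (TT f + TT g)
      · intro x
        rw [AddMonoidHom.add_apply, map_add, hTT, hTT]
        rfl
      · intro β
        rw [AddMonoidHom.add_apply, hC, hC, map_add, map_add]
        simp only [AddMonoidHom.add_apply, AddSubgroup.coe_add]
        push_cast
        ring)
  have hδ₂ : ∀ f, δ₂ f = Hmk (codiff bd ℤ) (k+1) (C f) := fun _ => rfl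
  have h4 : ∀ (f : ↥(DiffChar bd hbd pair k)) (T : I k →+ 𝕂) (ω : E (k+1))
          (c : I (k+1) →+ ℤ) (hc : c ∈ (codiff bd ℤ (k+1)).ker),
          (∀ x : ↥(Zc bd k), qZ 𝕂 (T x) = (f : ↥(Zc bd k) →+ KmodZ 𝕂) x) →
          codiff bd 𝕂 k T = pair (k+1) ω - PhiMap 𝕂 (k+1) c →
          δ₁ f = ω ∧ δ₂ f = Hmk (codiff bd ℤ) (k+1) ⟨c, hc⟩ := by
    intro f T ω c hc hT hTc
    have hTc' : ∀ β, T (bd k β) = pair (k+1) ω β - (c β : ℤ) :=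
      fun β => DFunLike.congr_fun hTc β
    have h1 : δ₁ f = ω := by
      apply huniq
      intro β
      rw [← hδ₁, ← hT, hTc', map_sub, aux_qint, sub_zero]
    refine ⟨h1, hu2 f T ⟨c, hc⟩ hT ?_⟩
    rw [h1]
    exact hTc'
  refine ⟨ι, δ₁, δ₂, ?_, ?_, hδ₁, fun f T ω c hc h h' => (h4 f T ω c hc h h').2, ?_, ?_, ?_⟩
  · intro a ha α hα hB
    ext x
    rw [hι, hι0]
    have := aux_Bvan bd k _ hB x x.2
    rw [AddMonoidHom.sub_apply, sub_eq_zero] at this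
    simp [this]
  · intro a ha
    have ha' : ∀ β, a (bd k β) = 0 := fun β => DFunLike.congr_fun ha β
    constructor
    · intro h
      obtain ⟨u, hu⟩ := aux_ext bd k a (fun x hx => by
        rw [hι] at h
        have := hι0 ⟨a, ha⟩ ⟨x, hx⟩
        rw [h] at this
        exact this.symm)
      refine ⟨u, ?_, ?_⟩
      · rw [AddMonoidHom.mem_ker]
        ext β
        have := hu _ (hZ β)
        rw [ha'] at this
        exact_mod_cast this
      · apply aux_van
        intro x hx
        have := hu x hx
        simp [PhiMap, this]
    · rintro ⟨u, hu, hB⟩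
      apply Subtype.ext
      ext x
      rw [hι, hι0]
      have := aux_Bvan bd k _ hB x x.2
      rw [AddMonoidHom.sub_apply, sub_eq_zero] at this
      change qZ 𝕂 (a x) = 0
      rw [this]
      exact aux_qint _
  · intro f
    refine ⟨hclosed f, (C f).1, (C f).2, rfl, TT f, ?_⟩
    ext β
    exact hC f β
  · rintro ω u hu hω ⟨T, hT⟩
    have hTc' : ∀ β, T (bd k β) = pair (k+1) ω β - (u β : ℤ) :=
      fun β => DFunLike.congr_fun hT β
    exact ⟨⟨(qZ 𝕂).comp (T.comp (Zc bd k).subtype), ω, fun β => by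
      simp [hTc', aux_qint]⟩, h4 _ T ω u hu (fun x => rfl) hT⟩
  · intro f
    constructor
    · rintro ⟨h1, h2⟩
      have h3 : (C f).1 ∈ Bc (codiff bd ℤ) (k+1) := by
        rw [hδ₂, ← map_zero (Hmk (codiff bd ℤ) (k+1)), aux_Hmk] at h2
        simpa using h2
      obtain ⟨u, hu⟩ := h3
      have hu' : ∀ β, u (bd k β) = (C f).1 β := fun β => DFunLike.congr_fun hu β
      refine ⟨Hmk (codiff bd 𝕂) k ⟨TT f + PhiMap 𝕂 k u, ?_⟩, ?_⟩
      · rw [AddMonoidHom.mem_ker]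
        ext β
        have := hC f β
        rw [h1, ← hu'] at this
        simp [codiff, PhiMap, this]
      · apply Subtype.ext
        ext x
        rw [hι, hι0, ← hTT]
        simp [PhiMap, aux_qint]
    · rintro ⟨a, rfl⟩
      obtain ⟨a, rfl⟩ : ∃ a', Hmk (codiff bd 𝕂) k a' = a :=
        QuotientAddGroup.mk'_surjective _ a
      rw [hι]
      have := h4 (ι0 a) a.1 0 0 (zero_mem _) (fun x => (hι0 a x).symm) (by
        have : codiff bd 𝕂 k a.1 = 0 := a.2
        rw [this]; simp)
      refine ⟨this.1, this.2.trans ?_⟩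
      exact map_zero (Hmk (codiff bd ℤ) (k+1))

end
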